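/- arXiv:2407.21131 — 6 statements merged into one kernel-verified Lean document; each statement's English description precedes it below -/
import Mathlib

section
/- Let M be an n×n matrix with nonnegative real entries. Then M is convergent to zero if and only if the matrix I − M (where I is the n×n identity matrix) is invertible and its inverse (I − M)⁻¹ has nonnegative entries. -/
open Filter

/-- A square matrix with nonnegative real entries is *convergent to zero* if its powers
tend to the zero matrix. -/
def ConvergentToZero {n : ℕ} (M : Matrix (Fin n) (Fin n) ℝ) : Prop :=
  Tendsto (fun k : ℕ => M ^ k) atTop (nhds 0)

/-- If the powers of a real square matrix tend to zero, then `1 - M` is invertible. -/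
theorem ConvergentToZero.isUnit_one_sub {n : ℕ} {M : Matrix (Fin n) (Fin n) ℝ}
    (h : ConvergentToZero M) : IsUnit (1 - M) := by
  have hdet : Tendsto (fun k : ℕ => (1 - M ^ k).det) atTop (nhds 1) := by
    have hcont : Continuous fun A : Matrix (Fin n) (Fin n) ℝ => (1 - A).det := by fun_prop
    simpa [Function.comp_def] using (hcont.tendsto 0).comp h
  obtain ⟨k, hk⟩ := (hdet.eventually_ne one_ne_zero).exists
  rw [← mul_neg_geom_sum M k, Matrix.det_mul] at hk
  exact (Matrix.isUnit_iff_isUnit_det _).2 (left_ne_zero_of_mul hk).isUnit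

/-- The partial sums of the Neumann series in terms of the inverse of `1 - M`. -/
theorem geom_sum_eq_one_sub_pow_mul_inv {n : ℕ} {M : Matrix (Fin n) (Fin n) ℝ}
    (hu : IsUnit (1 - M)) (k : ℕ) :
    ∑ m ∈ Finset.range k, M ^ m = (1 - M ^ k) * (1 - M)⁻¹ := by
  rw [← geom_sum_mul_neg M k,
    Matrix.mul_nonsing_inv_cancel_right _ _ ((Matrix.isUnit_iff_isUnit_det _).1 hu)]

/-- Powers of an entrywise nonnegative matrix are entrywise nonnegative. -/
theorem matrix_pow_apply_nonneg {n : ℕ} {M : Matrix (Fin n) (Fin n) ℝ}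
    (hM : ∀ i j, 0 ≤ M i j) (k : ℕ) (i j : Fin n) : 0 ≤ (M ^ k) i j := by
  induction k generalizing i j with
  | zero =>
    rw [pow_zero, Matrix.one_apply]
    split_ifs <;> simp
  | succ k ih =>
    rw [pow_succ, Matrix.mul_apply]
    exact Finset.sum_nonneg fun l _ => mul_nonneg (ih i l) (hM l j)

/-- A nonnegative square matrix `M` is convergent to zero if and only if
`I - M` is invertible and its inverse has nonnegative entries. -/
theorem convergentToZero_iff_inverse_nonneg {n : ℕ} (M : Matrix (Fin n) (Fin n) ℝ)
    (hM : ∀ i j, 0 ≤ M i j) :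
    ConvergentToZero M ↔ (IsUnit (1 - M) ∧ ∀ i j, 0 ≤ (1 - M)⁻¹ i j) := by
  constructor
  · intro h
    refine ⟨h.isUnit_one_sub, fun i j => ?_⟩
    have hlim : Tendsto (fun k : ℕ => ∑ m ∈ Finset.range k, M ^ m) atTop
        (nhds (1 - M)⁻¹) := by
      simp only [geom_sum_eq_one_sub_pow_mul_inv h.isUnit_one_sub]
      have hcont : Continuous fun A : Matrix (Fin n) (Fin n) ℝ => (1 - A) * (1 - M)⁻¹ := by
        fun_prop
      simpa [Function.comp_def] using (hcont.tendsto 0).comp h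
    refine ge_of_tendsto' ((hlim.apply_nhds i).apply_nhds j) fun k => ?_
    rw [Matrix.sum_apply]
    exact Finset.sum_nonneg fun m _ => matrix_pow_apply_nonneg hM m i j
  · rintro ⟨hu, hN⟩
    refine tendsto_pi_nhds.2 fun i => tendsto_pi_nhds.2 fun j => ?_
    refine (summable_of_sum_range_le (c := (1 - M)⁻¹ i j)
      (fun k => matrix_pow_apply_nonneg hM k i j) fun k => ?_).tendsto_atTop_zero
    rw [← Matrix.sum_apply, geom_sum_eq_one_sub_pow_mul_inv hu, sub_mul, one_mul,
      Matrix.sub_apply, sub_le_self_iff, Matrix.mul_apply]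
    exact Finset.sum_nonneg fun l _ => mul_nonneg (matrix_pow_apply_nonneg hM k i l) (hN l j)
end

section
/- Assume a11 < 1 and let θ > 0. Then the matrix M(θ) is convergent to zero if and only if h(θ) < 0. -/
open Filter

/-- The matrix `M(θ)`: for `θ > 0` its rows are `(a11, a12 (e^{θT}-1)/θ)` and
`(a21, a22 (1-e^{-θT})/θ)`, while `M(0)` has rows `(a11, a12 T)` and `(a21, a22 T)`. -/
noncomputable def Mmat (T a11 a12 a21 a22 θ : ℝ) : Matrix (Fin 2) (Fin 2) ℝ :=
  if θ = 0 then !![a11, a12 * T; a21, a22 * T]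
  else !![a11, a12 * ((Real.exp (θ * T) - 1) / θ);
          a21, a22 * ((1 - Real.exp (-θ * T)) / θ)]

/-- The function `h(θ) = tr M(θ) - 1 - det M(θ)`. -/
noncomputable def hfun (T a11 a12 a21 a22 θ : ℝ) : ℝ :=
  if θ = 0 then -(1 - a11) * (1 - a22 * T) + a12 * a21 * T
  else a11 + a22 * ((1 - Real.exp (-θ * T)) / θ) - 1
    - a11 * a22 * ((1 - Real.exp (-θ * T)) / θ)
    + a12 * a21 * ((Real.exp (θ * T) - 1) / θ)

open Matrix in
/-- A nonnegative matrix that strictly contracts some positive vector is convergent to zero. -/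
theorem convergentToZero_of_mulVec_le {n : ℕ} {M : Matrix (Fin n) (Fin n) ℝ} {v : Fin n → ℝ}
    {r : ℝ} (hM : ∀ i j, 0 ≤ M i j) (hv : ∀ i, 0 < v i) (hr0 : 0 ≤ r) (hr1 : r < 1)
    (h : ∀ i, (M *ᵥ v) i ≤ r * v i) : ConvergentToZero M := by
  have pow_nonneg_entry : ∀ (k : ℕ) i j, 0 ≤ (M ^ k) i j := by
    intro k
    induction k with
    | zero => intro i j; rw [pow_zero, Matrix.one_apply]; split_ifs <;> norm_num
    | succ k ih =>
      intro i j
      rw [pow_succ, Matrix.mul_apply]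
      exact Finset.sum_nonneg fun l _ => mul_nonneg (ih i l) (hM l j)
  have pow_mulVec_le : ∀ (k : ℕ) i, (M ^ k *ᵥ v) i ≤ r ^ k * v i := by
    intro k
    induction k with
    | zero => intro i; simp
    | succ k ih =>
      intro i
      rw [pow_succ', ← Matrix.mulVec_mulVec]
      calc (M *ᵥ (M ^ k *ᵥ v)) i ≤ ∑ j, M i j * (r ^ k * v j) := by
            rw [Matrix.mulVec, dotProduct]
            exact Finset.sum_le_sum fun j _ => mul_le_mul_of_nonneg_left (ih j) (hM i j)
        _ = r ^ k * (M *ᵥ v) i := by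
            simp only [Matrix.mulVec, dotProduct, Finset.mul_sum]
            exact Finset.sum_congr rfl fun j _ => by ring
        _ ≤ r ^ k * (r * v i) := mul_le_mul_of_nonneg_left (h i) (pow_nonneg hr0 k)
        _ = r ^ (k + 1) * v i := by ring
  refine tendsto_pi_nhds.2 fun i => tendsto_pi_nhds.2 fun j => ?_
  refine squeeze_zero (g := fun k => r ^ k * (v i / v j)) (fun k => pow_nonneg_entry k i j)
    (fun k => ?_) ?_
  · rw [← mul_div_assoc, le_div_iff₀ (hv j)]
    exact (Finset.single_le_sum (f := fun l => (M ^ k) i l * v l)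
      (fun l _ => mul_nonneg (pow_nonneg_entry k i l) (hv l).le) (Finset.mem_univ j)).trans
      (pow_mulVec_le k i)
  · simpa using (tendsto_pow_atTop_nhds_zero_of_lt_one hr0 hr1).mul_const (v i / v j)

open Matrix in
/-- If a nonnegative matrix convergent to zero does not decrease a vector, then that vector has no
positive entry. -/
theorem ConvergentToZero.nonpos_of_le_mulVec {n : ℕ} {M : Matrix (Fin n) (Fin n) ℝ}
    {v : Fin n → ℝ} (hM : ∀ i j, 0 ≤ M i j) (hconv : ConvergentToZero M)
    (h : ∀ i, v i ≤ (M *ᵥ v) i) (i : Fin n) : v i ≤ 0 := by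
  have le_pow_mulVec : ∀ (k : ℕ) i, v i ≤ (M ^ k *ᵥ v) i := by
    intro k
    induction k with
    | zero => intro i; simp
    | succ k ih =>
      intro i
      rw [pow_succ', ← Matrix.mulVec_mulVec]
      refine (h i).trans ?_
      rw [Matrix.mulVec, Matrix.mulVec, dotProduct, dotProduct]
      exact Finset.sum_le_sum fun j _ => mul_le_mul_of_nonneg_left (ih j) (hM i j)
  have hlim : Tendsto (fun k : ℕ => (M ^ k *ᵥ v) i) atTop (nhds (((0 : Matrix _ _ ℝ) *ᵥ v) i)) := by
    simp only [Matrix.mulVec, dotProduct]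
    exact tendsto_finsetSum _ fun j _ =>
      (tendsto_pi_nhds.1 (tendsto_pi_nhds.1 hconv i) j).mul_const (v j)
  rw [Matrix.zero_mulVec] at hlim
  exact ge_of_tendsto' hlim fun k => le_pow_mulVec k i

/-- A nonnegative `2 × 2` matrix whose first diagonal entry is less than one is convergent to zero
if and only if `b c < (1 - a) (1 - d)`. -/
theorem convergentToZero_fin_two_iff {a b c d : ℝ} (ha : 0 ≤ a) (hb : 0 ≤ b) (hc : 0 ≤ c)
    (hd : 0 ≤ d) (ha1 : a < 1) :
    ConvergentToZero !![a, b; c, d] ↔ b * c < (1 - a) * (1 - d) := by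
  have hM : ∀ i j, 0 ≤ !![a, b; c, d] i j := by
    intro i j
    fin_cases i <;> fin_cases j <;> assumption
  have hy : 0 < 1 - a := sub_pos.2 ha1
  constructor
  · intro hconv
    by_contra! hle
    have := hconv.nonpos_of_le_mulVec (v := ![b, 1 - a]) hM (by
      intro i
      fin_cases i <;> simp [Matrix.mulVec, dotProduct, Fin.sum_univ_two] <;> linarith) 1
    simp at this
    linarith
  · intro hlt
    obtain ⟨ε, hε, hcε⟩ : ∃ ε > 0, c * (b + ε) < (1 - a) * (1 - d) := by
      refine ⟨((1 - a) * (1 - d) - b * c) / (c + 1), div_pos (by linarith) (by linarith), ?_⟩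
      have hgap : c * (((1 - a) * (1 - d) - b * c) / (c + 1)) < (1 - a) * (1 - d) - b * c := by
        rw [← mul_div_assoc, div_lt_iff₀ (by linarith)]
        linarith
      linarith
    have hx : 0 < b + ε := by linarith
    let r := max ((a * (b + ε) + b * (1 - a)) / (b + ε))
      ((c * (b + ε) + d * (1 - a)) / (1 - a))
    refine convergentToZero_of_mulVec_le (v := ![b + ε, 1 - a]) (r := r) hM ?_ ?_ ?_ ?_
    · intro i
      fin_cases i
      exacts [hx, hy]
    · exact le_max_of_le_left (by positivity)
    · refine max_lt ?_ ?_
      · rw [div_lt_one hx]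
        linarith [mul_pos hε hy]
      · rw [div_lt_one hy]
        linarith
    · intro i
      fin_cases i
      · simpa [Matrix.mulVec, dotProduct, Fin.sum_univ_two] using
          (div_le_iff₀ hx).1 (le_max_left _ _ : _ ≤ r)
      · simpa [Matrix.mulVec, dotProduct, Fin.sum_univ_two] using
          (div_le_iff₀ hy).1 (le_max_right _ _ : _ ≤ r)

/-- If `a11 < 1` and `θ > 0`, then `M(θ)` is convergent to zero if and only
if `h(θ) < 0`. -/
theorem mmat_convergentToZero_iff_hfun_neg (T a11 a12 a21 a22 θ : ℝ)
    (hT : 0 < T) (h11 : 0 ≤ a11) (h12 : 0 ≤ a12) (h21 : 0 ≤ a21) (h22 : 0 ≤ a22)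
    (h11lt : a11 < 1) (hθ : 0 < θ) :
    ConvergentToZero (Mmat T a11 a12 a21 a22 θ) ↔ hfun T a11 a12 a21 a22 θ < 0 := by
  have hθT : 0 < θ * T := mul_pos hθ hT
  have hp : 0 ≤ (Real.exp (θ * T) - 1) / θ :=
    div_nonneg (sub_nonneg.2 (Real.one_le_exp hθT.le)) hθ.le
  have hq : 0 ≤ (1 - Real.exp (-θ * T)) / θ :=
    div_nonneg (sub_nonneg.2 (Real.exp_le_one_iff.2 (by linarith))) hθ.le
  rw [Mmat, hfun, if_neg hθ.ne', if_neg hθ.ne',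
    convergentToZero_fin_two_iff h11 (mul_nonneg h12 hp) h21 (mul_nonneg h22 hq) h11lt]
  constructor <;> intro h <;> linarith
end

section
/- Assume 0 ≤ a11 < 1. Then the function h is convex on (0, ∞); in particular its second derivative satisfies h''(θ) ≥ 0 for all θ > 0. -/
/-- The derivative of `(exp x - 1) / x` away from `0`. -/
theorem hasDerivAt_exp_sub_one_div {x : ℝ} (hx : x ≠ 0) :
    HasDerivAt (fun y : ℝ => (Real.exp y - 1) / y)
      ((Real.exp x * (x - 1) + 1) / x ^ 2) x := by
  refine (((Real.hasDerivAt_exp x).sub_const 1).div (hasDerivAt_id' x) hx).congr_deriv ?_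
  ring

/-- The second derivative of `(exp x - 1) / x` away from `0`. -/
theorem hasDerivAt_deriv_exp_sub_one_div {x : ℝ} (hx : x ≠ 0) :
    HasDerivAt (fun y : ℝ => (Real.exp y * (y - 1) + 1) / y ^ 2)
      ((Real.exp x * (x ^ 2 - 2 * x + 2) - 2) / x ^ 3) x := by
  refine ((((Real.hasDerivAt_exp x).mul ((hasDerivAt_id' x).sub_const 1)).add_const 1).div
    (hasDerivAt_pow 2 x) (pow_ne_zero 2 hx)).congr_deriv ?_
  simp only [Pi.mul_apply]
  field_simp
  ring

theorem monotone_exp_mul_sq_sub_two_mul_add_two :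
    Monotone fun x : ℝ => Real.exp x * (x ^ 2 - 2 * x + 2) - 2 := by
  refine monotone_of_hasDerivAt_nonneg (f' := fun x => Real.exp x * x ^ 2)
    (fun x => ?_) (fun x => by positivity)
  refine (((Real.hasDerivAt_exp x).mul
    (((hasDerivAt_pow 2 x).sub ((hasDerivAt_id' x).const_mul 2)).add_const 2)).sub_const
      2).congr_deriv ?_
  simp
  ring

theorem deriv2_exp_sub_one_div_nonneg (x : ℝ) :
    0 ≤ (Real.exp x * (x ^ 2 - 2 * x + 2) - 2) / x ^ 3 := by
  have hmono := monotone_exp_mul_sq_sub_two_mul_add_two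
  rcases le_total 0 x with hx | hx
  · have := hmono hx
    norm_num at this
    exact div_nonneg (by linarith) (by positivity)
  · have := hmono hx
    norm_num at this
    exact div_nonneg_of_nonpos (by linarith) (Odd.pow_nonpos (by decide) hx)

theorem hfun_eq_of_pos {T θ : ℝ} (a11 a12 a21 a22 : ℝ) (hT : 0 < T) (hθ : 0 < θ) :
    hfun T a11 a12 a21 a22 θ = (a11 - 1)
      + (1 - a11) * a22 * T * ((Real.exp (-T * θ) - 1) / (-T * θ))
      + a12 * a21 * T * ((Real.exp (T * θ) - 1) / (T * θ)) := by
  rw [hfun, if_neg hθ.ne', show -θ * T = -T * θ by ring, mul_comm θ T]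
  field_simp
  ring

/-- If `0 ≤ a11 < 1`, then `h` is convex on `(0, ∞)`; in particular its
second derivative is nonnegative there. -/
theorem hfun_convexOn (T a11 a12 a21 a22 : ℝ)
    (hT : 0 < T) (h11 : 0 ≤ a11) (h12 : 0 ≤ a12) (h21 : 0 ≤ a21) (h22 : 0 ≤ a22)
    (h11lt : a11 < 1) :
    ConvexOn ℝ (Set.Ioi (0 : ℝ)) (hfun T a11 a12 a21 a22) ∧
      ∀ θ > (0 : ℝ), 0 ≤ deriv (deriv (hfun T a11 a12 a21 a22)) θ := by
  let d (x : ℝ) : ℝ := (Real.exp x * (x - 1) + 1) / x ^ 2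
  let dd (x : ℝ) : ℝ := (Real.exp x * (x ^ 2 - 2 * x + 2) - 2) / x ^ 3
  let hderiv (θ : ℝ) : ℝ := (1 - a11) * a22 * T * (d (-T * θ) * -T) + a12 * a21 * T * (d (T * θ) * T)
  let hderivTwo (θ : ℝ) : ℝ :=
    (1 - a11) * a22 * T * (dd (-T * θ) * -T * -T) + a12 * a21 * T * (dd (T * θ) * T * T)
  have hlin (c x : ℝ) : HasDerivAt (fun y => c * y) c x := by
    simpa using (hasDerivAt_id' x).const_mul c
  have hneg {x : ℝ} (hx : 0 < x) : -T * x ≠ 0 := mul_ne_zero (neg_ne_zero.mpr hT.ne') hx.ne'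
  have hpos {x : ℝ} (hx : 0 < x) : T * x ≠ 0 := (mul_pos hT hx).ne'
  have hd {x : ℝ} (hx : 0 < x) : HasDerivAt (hfun T a11 a12 a21 a22) (hderiv x) x := by
    have key := ((((hasDerivAt_exp_sub_one_div (hneg hx)).comp x (hlin (-T) x)).const_mul
      ((1 - a11) * a22 * T)).const_add (a11 - 1)).add
      (((hasDerivAt_exp_sub_one_div (hpos hx)).comp x (hlin T x)).const_mul (a12 * a21 * T))
    refine key.congr_of_eventuallyEq ?_
    filter_upwards [lt_mem_nhds hx] with y hy
    exact hfun_eq_of_pos a11 a12 a21 a22 hT hy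
  have hdd {x : ℝ} (hx : 0 < x) : HasDerivAt hderiv (hderivTwo x) x :=
    ((((hasDerivAt_deriv_exp_sub_one_div (hneg hx)).comp x (hlin (-T) x)).mul_const
      (-T)).const_mul ((1 - a11) * a22 * T)).add
      ((((hasDerivAt_deriv_exp_sub_one_div (hpos hx)).comp x (hlin T x)).mul_const
        T).const_mul (a12 * a21 * T))
  have hnonneg (x : ℝ) : 0 ≤ hderivTwo x := by
    have h1 : 0 ≤ dd (-T * x) := deriv2_exp_sub_one_div_nonneg _
    have h2 : 0 ≤ dd (T * x) := deriv2_exp_sub_one_div_nonneg _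
    have h3 : 0 ≤ 1 - a11 := by linarith
    have h4 : dd (-T * x) * -T * -T = dd (-T * x) * T * T := by ring
    simp only [hderivTwo, h4]
    positivity
  constructor
  · refine convexOn_of_hasDerivWithinAt2_nonneg (f' := hderiv) (f'' := hderivTwo) (convex_Ioi 0)
      (fun x hx => (hd hx).continuousAt.continuousWithinAt) ?_ ?_ (fun x _ => hnonneg x)
    all_goals
      rw [interior_Ioi]
      intro x hx
    · exact (hd hx).hasDerivWithinAt
    · exact (hdd hx).hasDerivWithinAt
  · intro x hx
    have heq : deriv (hfun T a11 a12 a21 a22) =ᶠ[nhds x] hderiv := by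
      filter_upwards [lt_mem_nhds hx] with y hy
      exact (hd hy).deriv
    rw [heq.deriv_eq, (hdd hx).deriv]
    exact hnonneg x
end

section
/- Assume 0 ≤ a11 < 1 and 0 < a22 < 1/T. If h(0) < 0, then the matrix M(0) is convergent to zero. -/
open Filter

/-- A nonnegative matrix that strictly decreases every entry of some positive vector is
convergent to zero. -/
theorem convergentToZero_of_mulVec_lt {n : ℕ} {M : Matrix (Fin n) (Fin n) ℝ} {v : Fin n → ℝ}
    (hM : ∀ i j, 0 ≤ M i j) (hv : ∀ i, 0 < v i) (hlt : ∀ i, (M.mulVec v) i < v i) :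
    ConvergentToZero M := by
  obtain ⟨r, hr, hr1, hr0⟩ :
      ∃ r : ℝ, (∀ i, (M.mulVec v) i < r * v i) ∧ r < 1 ∧ 0 < r := by
    have hcontract : ∀ᶠ r : ℝ in nhdsWithin 1 (Set.Iio 1), ∀ i, (M.mulVec v) i < r * v i := by
      refine eventually_all.2 fun i => ?_
      have hcont : Tendsto (fun r : ℝ => r * v i) (nhdsWithin 1 (Set.Iio 1)) (nhds (1 * v i)) :=
        ((continuous_id.mul continuous_const).tendsto 1).mono_left nhdsWithin_le_nhds
      exact hcont.eventually_const_lt (by simpa using hlt i)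
    have hpos : ∀ᶠ r : ℝ in nhdsWithin 1 (Set.Iio 1), 0 < r :=
      nhdsWithin_le_nhds (lt_mem_nhds one_pos)
    exact (hcontract.and (eventually_mem_nhdsWithin.and hpos)).exists
  have hnonneg : ∀ k i j, 0 ≤ (M ^ k) i j := by
    intro k
    induction k with
    | zero =>
      intro i j
      rw [pow_zero, Matrix.one_apply]
      split_ifs <;> norm_num
    | succ k ih =>
      intro i j
      rw [pow_succ, Matrix.mul_apply]
      exact Finset.sum_nonneg fun l _ => mul_nonneg (ih i l) (hM l j)
  have hpow : ∀ k i, ((M ^ k).mulVec v) i ≤ r ^ k * v i := by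
    intro k
    induction k with
    | zero => simp
    | succ k ih =>
      intro i
      calc ((M ^ (k + 1)).mulVec v) i = ∑ j, (M ^ k) i j * (M.mulVec v) j := by
            rw [pow_succ, ← Matrix.mulVec_mulVec]; rfl
        _ ≤ ∑ j, (M ^ k) i j * (r * v j) :=
            Finset.sum_le_sum fun j _ => mul_le_mul_of_nonneg_left (hr j).le (hnonneg k i j)
        _ = r * ((M ^ k).mulVec v) i := by
            simp only [Matrix.mulVec, dotProduct, Finset.mul_sum]
            exact Finset.sum_congr rfl fun j _ => by ring
        _ ≤ r * (r ^ k * v i) := mul_le_mul_of_nonneg_left (ih i) hr0.le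
        _ = r ^ (k + 1) * v i := by ring
  refine tendsto_pi_nhds.2 fun i => tendsto_pi_nhds.2 fun j => ?_
  have hbound : ∀ k, (M ^ k) i j ≤ r ^ k * (v i / v j) := by
    intro k
    rw [← mul_div_assoc, le_div_iff₀ (hv j)]
    exact (Finset.single_le_sum (f := fun l => (M ^ k) i l * v l)
      (fun l _ => mul_nonneg (hnonneg k i l) (hv l).le) (Finset.mem_univ j)).trans (hpow k i)
  have hgeom : Tendsto (fun k : ℕ => r ^ k * (v i / v j)) atTop (nhds 0) := by
    simpa using (tendsto_pow_atTop_nhds_zero_of_lt_one hr0.le hr1).mul_const (v i / v j)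
  exact squeeze_zero (fun k => hnonneg k i j) hbound hgeom

/-- If `0 ≤ a11 < 1`, `0 < a22 < 1/T` and `h(0) < 0`, then `M(0)` is
convergent to zero. -/
theorem mmat_zero_convergentToZero (T a11 a12 a21 a22 : ℝ)
    (hT : 0 < T) (h11 : 0 ≤ a11) (h12 : 0 ≤ a12) (h21 : 0 ≤ a21)
    (h11lt : a11 < 1) (h22pos : 0 < a22) (h22lt : a22 < 1 / T)
    (h0 : hfun T a11 a12 a21 a22 0 < 0) :
    ConvergentToZero (Mmat T a11 a12 a21 a22 0) := by
  have hd : a22 * T < 1 := (lt_div_iff₀ hT).1 h22lt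
  have hb : 0 ≤ a12 * T := mul_nonneg h12 hT.le
  simp only [hfun, if_true] at h0
  rw [Mmat, if_pos rfl]
  obtain ⟨ε, hε, hsmall⟩ :
      ∃ ε > 0, a21 * ε < (1 - a11) * (1 - a22 * T) - a12 * T * a21 :=
    exists_pos_mul_lt (by linarith) a21
  refine convergentToZero_of_mulVec_lt (v := ![a12 * T + ε, 1 - a11]) ?_ ?_ ?_
  · intro i j
    fin_cases i <;> fin_cases j <;> simp <;> positivity
  · intro i
    fin_cases i <;> simp <;> linarith
  · intro i
    fin_cases i <;> simp [Matrix.mulVec, dotProduct, Fin.sum_univ_two] <;> nlinarith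
end

section
/- Assume a11 < 1 and τ := a22(1−a11) − a12·a21 > 0. Then the function h̃ is strictly convex on (0, ∞); in particular its second derivative satisfies h̃''(θ) > 0 for all θ > 0. -/
/-- The function `h̃(θ) = a11 + a22/θ - 1 - a11 a22/θ + a12 a21 (e^{θT}-1)/θ` (for `θ > 0`). -/
noncomputable def htilde (T a11 a12 a21 a22 θ : ℝ) : ℝ :=
  a11 + a22 / θ - 1 - a11 * a22 / θ + a12 * a21 * ((Real.exp (θ * T) - 1) / θ)

theorem hasDerivAt_htilde (T a11 a12 a21 a22 : ℝ) {θ : ℝ} (hθ : 0 < θ) :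
    HasDerivAt (htilde T a11 a12 a21 a22)
      ((a12 * a21 * (Real.exp (θ * T) * (θ * T - 1)) - (a22 * (1 - a11) - a12 * a21)) / θ ^ 2)
      θ := by
  have hexp : HasDerivAt (fun x : ℝ => Real.exp (x * T)) (Real.exp (θ * T) * T) θ := by
    simpa using ((hasDerivAt_id θ).mul_const T).exp
  have hinv (c : ℝ) := (hasDerivAt_const θ c).fun_div (hasDerivAt_id' θ) hθ.ne'
  have hquot := ((hexp.sub_const 1).fun_div (hasDerivAt_id' θ) hθ.ne').const_mul (a12 * a21)
  have h := ((((hinv a22).const_add a11).sub_const 1).fun_sub (hinv (a11 * a22))).fun_add hquot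
  refine h.congr_deriv ?_
  field_simp
  ring

theorem hasDerivAt_deriv_htilde (T a11 a12 a21 a22 : ℝ) {θ : ℝ} (hθ : 0 < θ) :
    HasDerivAt (deriv (htilde T a11 a12 a21 a22))
      ((a12 * a21 * (Real.exp (θ * T) * ((θ * T - 1) ^ 2 + 1)) +
        2 * (a22 * (1 - a11) - a12 * a21)) / θ ^ 3) θ := by
  have hlin : HasDerivAt (fun x : ℝ => x * T) T θ := by
    simpa using (hasDerivAt_id θ).mul_const T
  have h := (((hlin.exp.fun_mul (hlin.sub_const 1)).const_mul (a12 * a21)).sub_const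
    (a22 * (1 - a11) - a12 * a21)).fun_div (hasDerivAt_pow 2 θ) (pow_ne_zero 2 hθ.ne')
  refine (h.congr_deriv ?_).congr_of_eventuallyEq ?_
  · field_simp
    ring
  · filter_upwards [Ioi_mem_nhds hθ] with x hx
    exact (hasDerivAt_htilde T a11 a12 a21 a22 hx).deriv

/-- If `a11 < 1` and `τ := a22 (1 - a11) - a12 a21 > 0`, then `h̃` is
strictly convex on `(0, ∞)`; in particular its second derivative is positive there. -/
theorem htilde_strictConvexOn (T a11 a12 a21 a22 : ℝ)
    (hT : 0 < T) (h11 : 0 ≤ a11) (h12 : 0 ≤ a12) (h21 : 0 ≤ a21) (h22 : 0 ≤ a22)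
    (h11lt : a11 < 1) (hτ : 0 < a22 * (1 - a11) - a12 * a21) :
    StrictConvexOn ℝ (Set.Ioi (0 : ℝ)) (htilde T a11 a12 a21 a22) ∧
      ∀ θ > (0 : ℝ), 0 < deriv (deriv (htilde T a11 a12 a21 a22)) θ := by
  have hpos : ∀ θ > (0 : ℝ), 0 < deriv (deriv (htilde T a11 a12 a21 a22)) θ := by
    intro θ hθ
    rw [(hasDerivAt_deriv_htilde T a11 a12 a21 a22 hθ).deriv]
    positivity
  refine ⟨strictConvexOn_of_deriv2_pos' (convex_Ioi 0) ?_ fun θ hθ => hpos θ hθ, hpos⟩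
  exact fun θ hθ => (hasDerivAt_htilde T a11 a12 a21 a22 hθ).continuousAt.continuousWithinAt
end

section
/- (Avramescu's fixed point theorem.) Let D₁ be a nonempty closed convex subset of a normed space Y, let (D₂, d) be a nonempty complete metric space, and let N₁ : D₁ × D₂ → D₁ and N₂ : D₁ × D₂ → D₂ be continuous mappings. Assume that (i) the image N₁(D₁ × D₂) is a relatively compact subset of Y, and (ii) there is a constant L ∈ [0, 1) such that d(N₂(x, y), N₂(x, ȳ)) ≤ L·d(y, ȳ) for all x ∈ D₁ and all y, ȳ ∈ D₂. Then there exists (x, y) ∈ D₁ × D₂ such that N₁(x, y) = x and N₂(x, y) = y. -/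
open Set Metric MeasureTheory Polynomial Filter Topology
open scoped NNReal

section NormedSpace

variable {E : Type*} [NormedAddCommGroup E] [NormedSpace ℝ E]

/-- A Lipschitz map on a closed ball that vanishes on the sphere stays Lipschitz, with the same
constant, when extended by zero. -/
theorem LipschitzOnWith.indicator_closedBall {K : ℝ≥0} {R : ℝ} {g : E → E}
    (hg : LipschitzOnWith K g (closedBall 0 R)) (h0 : ∀ x ∈ sphere (0 : E) R, g x = 0) :
    LipschitzWith K ((closedBall (0 : E) R).indicator g) := by
  have key : ∀ x ∈ closedBall (0 : E) R, ∀ y ∉ closedBall (0 : E) R, ‖g x‖ ≤ K * dist x y := by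
    intro x hx y hy
    have hc : ContinuousOn (fun t : ℝ => ‖AffineMap.lineMap x y t‖) (Icc 0 1) := by fun_prop
    obtain ⟨t, ht, h⟩ := intermediate_value_Icc zero_le_one hc
      (show R ∈ Icc _ _ by
        simp only [mem_closedBall_zero_iff, not_le] at hx hy
        simpa using ⟨hx, hy.le⟩)
    set z := AffineMap.lineMap x y t
    have hz : z ∈ sphere (0 : E) R := by simpa using h
    have hd : dist x z ≤ dist x y := by
      rw [dist_left_lineMap, Real.norm_of_nonneg ht.1]
      exact mul_le_of_le_one_left dist_nonneg ht.2
    calc ‖g x‖ = dist (g x) (g z) := by rw [h0 z hz, dist_zero_right]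
      _ ≤ K * dist x z := hg.dist_le_mul x hx z (sphere_subset_closedBall hz)
      _ ≤ K * dist x y := by gcongr
  refine LipschitzWith.of_dist_le_mul fun x y => ?_
  by_cases hx : x ∈ closedBall (0 : E) R <;> by_cases hy : y ∈ closedBall (0 : E) R
  · simpa [hx, hy] using hg.dist_le_mul x hx y hy
  · rw [indicator_of_mem hx, indicator_of_notMem hy, dist_zero_right]
    exact key x hx y hy
  · rw [indicator_of_mem hy, indicator_of_notMem hx, dist_zero_left, dist_comm]
    exact key y hy x hx
  · rw [indicator_of_notMem hx, indicator_of_notMem hy, dist_self]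
    positivity

variable [FiniteDimensional ℝ E]

theorem ContinuousLinearMap.exists_polynomial_eval_eq_det_one_add_smul (A : E →L[ℝ] E) :
    ∃ p : ℝ[X], p.natDegree ≤ Module.finrank ℝ E ∧
      ∀ t : ℝ, p.eval t = (1 + t • A : E →L[ℝ] E).det := by
  let b := Module.finBasis ℝ E
  let M := LinearMap.toMatrix b b (A : E →ₗ[ℝ] E)
  refine ⟨_, (Polynomial.natDegree_det_X_add_C_le M 1).trans_eq (by simp), fun t => ?_⟩
  have h : ((1 + t • A : E →L[ℝ] E) : E →ₗ[ℝ] E) = t • (A : E →ₗ[ℝ] E) + 1 := by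
    ext; simp [add_comm]
  rw [ContinuousLinearMap.det, h, ← LinearMap.det_toMatrix b, ← Polynomial.coe_evalRingHom,
    RingHom.map_det]
  congr 1
  ext i j
  simp only [M, LinearMap.toMatrix_one, Matrix.one_apply, map_add, map_smul, RingHom.mapMatrix_apply,
    Matrix.map_apply, Matrix.add_apply, Matrix.smul_apply, smul_eq_mul, coe_evalRingHom]
  split_ifs <;> simp <;> ring

theorem ContinuousLinearMap.det_one_add_pos_of_norm_lt_one {A : E →L[ℝ] E} (hA : ‖A‖ < 1) :
    0 < (1 + A : E →L[ℝ] E).det := by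
  have hne : ∀ t ∈ Icc (0 : ℝ) 1, (1 + t • A : E →L[ℝ] E).det ≠ 0 := by
    intro t ht h0
    have hlt : ‖-(t • A)‖ < 1 := by
      rw [norm_neg, norm_smul, Real.norm_of_nonneg ht.1]
      nlinarith [norm_nonneg A, ht.2]
    have hu := isUnit_one_sub_of_norm_lt_one hlt
    rw [sub_neg_eq_add] at hu
    have hu' : IsUnit ((1 + t • A : E →L[ℝ] E) : E →ₗ[ℝ] E) :=
      hu.map (ContinuousLinearMap.toLinearMapRingHom (R₁ := ℝ) (M₁ := E))
    exact (LinearMap.isUnit_det _ hu').ne_zero h0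
  obtain ⟨p, -, hp⟩ := A.exists_polynomial_eval_eq_det_one_add_smul
  by_contra! h1
  have hmem : (0 : ℝ) ∈ Icc (p.eval 1) (p.eval 0) := by simpa [hp, ContinuousLinearMap.det] using h1
  obtain ⟨t, ht, h⟩ := intermediate_value_Icc' zero_le_one p.continuous.continuousOn hmem
  exact hne t ht ((hp t).symm.trans h)

/-- Lagrange extrapolation: the value at `1` of a polynomial of degree at most `n` is a fixed affine
combination of its values at `n + 1` nodes in `[0, δ)`. -/
theorem Polynomial.exists_weights_eval_one (n : ℕ) {δ : ℝ} (hδ : 0 < δ) :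
    ∃ (v w : Fin (n + 1) → ℝ), (∀ i, 0 ≤ v i ∧ v i < δ) ∧ ∑ i, w i = 1 ∧
      ∀ p : ℝ[X], p.natDegree ≤ n → p.eval 1 = ∑ i, w i * p.eval (v i) := by
  let v : Fin (n + 1) → ℝ := fun i => δ * ((i : ℝ) / (n + 1))
  have hv : Set.InjOn v (Finset.univ : Finset (Fin (n + 1))) := by
    intro i _ j _ h
    have hn : (n + 1 : ℝ) ≠ 0 := by positivity
    have := (div_left_inj' hn).1 (mul_left_cancel₀ hδ.ne' h)
    exact Fin.ext (by exact_mod_cast this)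
  refine ⟨v, fun i => (Lagrange.basis Finset.univ v i).eval 1, fun i => ⟨by positivity, ?_⟩, ?_, ?_⟩
  · have : (i : ℝ) < n + 1 := by exact_mod_cast i.2
    exact mul_lt_of_lt_one_right hδ ((div_lt_one (by positivity)).2 this)
  · rw [← Polynomial.eval_finsetSum, Lagrange.sum_basis hv Finset.univ_nonempty, eval_one]
  · intro p hp
    have hdeg : p.degree < (Finset.univ : Finset (Fin (n + 1))).card := by
      refine p.degree_le_natDegree.trans_lt ?_
      rw [Finset.card_univ, Fintype.card_fin]
      exact_mod_cast Nat.lt_succ_of_le hp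
    conv_lhs => rw [Lagrange.eq_interpolate hv hdeg, Lagrange.interpolate_apply]
    simp [Polynomial.eval_finsetSum, mul_comm]

theorem LipschitzWith.bijective_id_add {K : ℝ≥0} (hK : K < 1) {g : E → E}
    (hg : LipschitzWith K g) : Function.Bijective fun x => x + g x := by
  constructor
  · intro x y h
    have h' : x - y = g y - g x := by
      rw [sub_eq_sub_iff_add_eq_add, add_comm (g y)]
      exact h
    have h1 := hg.dist_le_mul y x
    rw [dist_eq_norm, ← h', dist_comm, dist_eq_norm] at h1
    have hK' : (K : ℝ) < 1 := hK
    by_contra hne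
    nlinarith [norm_pos_iff.2 (sub_ne_zero.2 hne)]
  · intro y
    have hc : ContractingWith K fun x => y - g x :=
      ⟨hK, LipschitzWith.of_dist_le_mul fun a b => by
        simpa only [dist_sub_left] using hg.dist_le_mul a b⟩
    have := FiniteDimensional.complete ℝ E
    refine ⟨hc.fixedPoint, ?_⟩
    have h : y - g hc.fixedPoint = hc.fixedPoint := hc.fixedPoint_isFixedPt
    exact (sub_eq_iff_eq_add.1 h).symm

theorem LipschitzWith.image_id_add_ball {K : ℝ≥0} (hK : K < 1) {R : ℝ} {g : E → E}
    (hg : LipschitzWith K g) (h0 : ∀ x ∉ ball (0 : E) R, g x = 0) :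
    (fun x => x + g x) '' ball 0 R = ball 0 R := by
  have hb := hg.bijective_id_add hK
  have hc : (fun x => x + g x) '' (ball 0 R)ᶜ = (ball 0 R)ᶜ := by
    conv_rhs => rw [← image_id (ball (0 : E) R)ᶜ]
    exact image_congr fun x hx => by simp [h0 x hx]
  rwa [image_compl_eq hb, compl_inj_iff] at hc

variable [MeasurableSpace E] [BorelSpace E]

/-- A perturbation of the identity by a contraction supported in a ball preserves the volume of
that ball, so its Jacobian determinant integrates to this volume. -/
theorem LipschitzWith.integral_det_one_add_fderiv (μ : Measure E) [μ.IsAddHaarMeasure]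
    {K : ℝ≥0} (hK : K < 1) {R : ℝ} {g : E → E} {g' : E → E →L[ℝ] E}
    (hg : LipschitzWith K g) (h0 : ∀ x ∉ ball (0 : E) R, g x = 0)
    (hg' : ∀ x ∈ ball (0 : E) R, HasFDerivAt g (g' x) x) :
    IntegrableOn (fun x => (1 + g' x : E →L[ℝ] E).det) (ball 0 R) μ ∧
      ∫ x in ball 0 R, (1 + g' x : E →L[ℝ] E).det ∂μ = μ.real (ball 0 R) := by
  have hd : ∀ x ∈ ball (0 : E) R,
      HasFDerivWithinAt (fun x => x + g x) (1 + g' x) (ball 0 R) x := fun x hx =>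
    ((hasFDerivAt_id x).add (hg' x hx)).hasFDerivWithinAt
  have hinj : InjOn (fun x => x + g x) (ball 0 R) := (hg.bijective_id_add hK).1.injOn
  have habs : EqOn (fun x => |(1 + g' x : E →L[ℝ] E).det| • (1 : ℝ))
      (fun x => (1 + g' x : E →L[ℝ] E).det) (ball 0 R) := fun x hx => by
    have hlt : ‖g' x‖ < 1 := ((hg' x hx).le_of_lipschitz hg).trans_lt hK
    simp [abs_of_pos (ContinuousLinearMap.det_one_add_pos_of_norm_lt_one hlt)]
  have himg := hg.image_id_add_ball hK h0
  have hmeas : MeasurableSet (ball (0 : E) R) := measurableSet_ball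
  constructor
  · rw [← integrableOn_congr_fun habs hmeas]
    refine (integrableOn_image_iff_integrableOn_abs_det_fderiv_smul μ hmeas hd hinj
      (fun _ => (1 : ℝ))).1 ?_
    rw [himg]
    exact integrableOn_const measure_ball_lt_top.ne
  · rw [← setIntegral_congr_fun hmeas habs]
    refine (integral_image_eq_integral_abs_det_fderiv_smul μ hmeas hd hinj
      (fun _ => (1 : ℝ))).symm.trans ?_
    simp [himg]

/-- The Jacobian determinant of `id + t • g` is a polynomial in `t` whose integral over the ball is
the volume for small `t`, hence also for `t = 1`; so it cannot vanish identically there. -/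
theorem LipschitzWith.exists_det_one_add_fderiv_ne_zero
    {K : ℝ≥0} {R : ℝ} (hR : 0 < R) {g : E → E} {g' : E → E →L[ℝ] E}
    (hg : LipschitzWith K g) (h0 : ∀ x ∉ ball (0 : E) R, g x = 0)
    (hg' : ∀ x ∈ ball (0 : E) R, HasFDerivAt g (g' x) x) :
    ∃ x ∈ ball (0 : E) R, (1 + g' x : E →L[ℝ] E).det ≠ 0 := by
  by_contra! hdet
  let μ : Measure E := Measure.addHaar
  obtain ⟨v, w, hv, hw, hp⟩ := Polynomial.exists_weights_eval_one (Module.finrank ℝ E)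
    (δ := ((K : ℝ) + 1)⁻¹) (by positivity)
  have hint := fun i => LipschitzWith.integral_det_one_add_fderiv μ
    (K := ‖v i‖₊ * K) (R := R) (g := fun x => v i • g x) (g' := fun x => v i • g' x)
    (by
      have h := hv i
      rw [← NNReal.coe_lt_coe]
      simp only [NNReal.coe_mul, coe_nnnorm, NNReal.coe_one, Real.norm_of_nonneg h.1]
      rw [inv_eq_one_div, lt_div_iff₀ (by positivity)] at h
      nlinarith)
    ((lipschitzWith_smul (v i)).comp hg) (fun x hx => by simp [h0 x hx])
    (fun x hx => (hg' x hx).const_smul (v i))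
  have hsum : ∫ x in ball 0 R, ∑ i, w i * (1 + v i • g' x : E →L[ℝ] E).det ∂μ
      = μ.real (ball 0 R) := by
    rw [integral_finsetSum _ fun i _ => (hint i).1.const_mul (w i)]
    simp only [integral_const_mul, (hint _).2, ← Finset.sum_mul, hw, one_mul]
  have hzero : ∀ x ∈ ball (0 : E) R, ∑ i, w i * (1 + v i • g' x : E →L[ℝ] E).det = 0 := by
    intro x hx
    obtain ⟨p, hdeg, hpe⟩ := (g' x).exists_polynomial_eval_eq_det_one_add_smul
    simp only [← hpe, ← hp p hdeg]
    simpa [hpe] using hdet x hx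
  rw [setIntegral_congr_fun measurableSet_ball hzero, integral_zero] at hsum
  exact (ENNReal.toReal_pos (measure_ball_pos μ 0 hR).ne' measure_ball_lt_top.ne).ne hsum

end NormedSpace

section InnerProductSpace

variable {E : Type*} [NormedAddCommGroup E] [InnerProductSpace ℝ E] [FiniteDimensional ℝ E]

/-- There is no `C¹` retraction of a closed ball onto its boundary sphere. -/
theorem ContDiffOn.exists_norm_ne_of_eqOn_sphere {R : ℝ} (hR : 0 < R) {r : E → E}
    (hr : ContDiffOn ℝ 1 r (closedBall 0 R)) (hid : ∀ x ∈ sphere (0 : E) R, r x = x) :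
    ∃ x ∈ ball (0 : E) R, ‖r x‖ ≠ R := by
  borelize E
  by_contra! hnorm
  obtain ⟨K, hK⟩ := (hr.sub contDiffOn_id).exists_lipschitzOnWith one_ne_zero
    (convex_closedBall 0 R) (isCompact_closedBall 0 R)
  have hdiff : ∀ x ∈ ball (0 : E) R, HasFDerivAt r (fderiv ℝ r x) x := fun x hx =>
    ((hr.differentiableOn one_ne_zero).differentiableAt
      (mem_of_superset (isOpen_ball.mem_nhds hx) ball_subset_closedBall)).hasFDerivAt
  have hlip := hK.indicator_closedBall fun x hx => by simp [hid x hx]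
  obtain ⟨x, hx, hdet⟩ := hlip.exists_det_one_add_fderiv_ne_zero hR
    (g' := fun x => fderiv ℝ r x - 1)
    (fun x hx => by
      by_cases hx' : x ∈ closedBall (0 : E) R
      · have : x ∈ sphere (0 : E) R := by
          rw [← closedBall_sdiff_ball]; exact ⟨hx', hx⟩
        simp [hid x this]
      · simp [hx'])
    (fun x hx => by
      refine ((hdiff x hx).sub (hasFDerivAt_id x)).congr_of_eventuallyEq ?_
      filter_upwards [isOpen_ball.mem_nhds hx] with y hy
      rw [indicator_of_mem (ball_subset_closedBall hy), Pi.sub_apply])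
  rw [add_sub_cancel] at hdet
  have hsurj : Function.Surjective (fderiv ℝ r x) :=
    (LinearEquiv.ofIsUnitDet (f := (fderiv ℝ r x : E →ₗ[ℝ] E)) (v := Module.finBasis ℝ E)
      (v' := Module.finBasis ℝ E)
      (by rw [LinearMap.det_toMatrix]; exact hdet.isUnit)).surjective
  obtain ⟨v, hv⟩ := hsurj (r x)
  have hconst : HasFDerivAt (fun y => ‖r y‖ ^ 2) (0 : E →L[ℝ] ℝ) x := by
    refine (hasFDerivAt_const (R ^ 2) x).congr_of_eventuallyEq ?_
    filter_upwards [isOpen_ball.mem_nhds hx] with y hy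
    rw [hnorm y hy]
  have h := DFunLike.congr_fun (hconst.unique (hdiff x hx).norm_sq) v
  simp [hv, hnorm x hx, hR.ne'] at h

/-- Brouwer's fixed point theorem for `C¹` maps. A map without fixed points yields the retraction
sending `x` to the point where the ray from `f x` through `x` leaves the ball. -/
theorem ContDiff.exists_fixedPoint_of_norm_lt {R : ℝ} {f : E → E} (hf : ContDiff ℝ 1 f)
    (hR : ∀ x, ‖f x‖ < R) : ∃ x ∈ closedBall (0 : E) R, f x = x := by
  by_contra! hne
  have hR0 : 0 < R := (norm_nonneg _).trans_lt (hR 0)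
  let u : E → E := fun x => x - f x
  let a : E → ℝ := fun x => Inner.inner ℝ x (u x)
  let d : E → ℝ := fun x => a x ^ 2 + ‖u x‖ ^ 2 * (R ^ 2 - ‖x‖ ^ 2)
  let c : E → ℝ := fun x => (√(d x) - a x) / ‖u x‖ ^ 2
  have hu : ContDiff ℝ 1 u := contDiff_id.sub hf
  have ha : ContDiff ℝ 1 a := contDiff_id.inner ℝ hu
  have hd : ContDiff ℝ 1 d :=
    (ha.pow 2).add ((hu.norm_sq ℝ).mul (contDiff_const.sub (contDiff_id.norm_sq ℝ)))
  have hu0 : ∀ x ∈ closedBall (0 : E) R, 0 < ‖u x‖ := fun x hx =>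
    norm_pos_iff.2 (sub_ne_zero.2 (hne x hx).symm)
  have ha0 : ∀ x ∈ sphere (0 : E) R, 0 < a x := fun x hx => by
    have hx' : ‖x‖ = R := by simpa using hx
    have h1 : Inner.inner ℝ x (f x) ≤ ‖x‖ * ‖f x‖ := real_inner_le_norm _ _
    have h2 : a x = ‖x‖ ^ 2 - Inner.inner ℝ x (f x) := by
      simp [a, u, inner_sub_right]
    have h3 := hR x
    rw [hx'] at h1 h2
    nlinarith
  have hd0 : ∀ x ∈ closedBall (0 : E) R, 0 < d x := fun x hx => by
    have hx' : ‖x‖ ≤ R := by simpa using hx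
    have h1 := hu0 x hx
    rcases hx'.eq_or_lt with h | h
    · have h2 := ha0 x (by simpa using h)
      simp only [d, h]
      nlinarith
    · have : 0 < R ^ 2 - ‖x‖ ^ 2 := by nlinarith [norm_nonneg x]
      positivity
  have hr : ContDiffOn ℝ 1 (fun x => x + c x • u x) (closedBall 0 R) := by
    refine contDiffOn_id.add (ContDiffOn.smul (ContDiffOn.div ?_ (hu.norm_sq ℝ).contDiffOn
      fun x hx => (pow_pos (hu0 x hx) 2).ne') hu.contDiffOn)
    exact (hd.contDiffOn.sqrt fun x hx => (hd0 x hx).ne').sub ha.contDiffOn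
  obtain ⟨x, hx, h⟩ := hr.exists_norm_ne_of_eqOn_sphere hR0 fun x hx => by
    have hx' : ‖x‖ = R := by simpa using hx
    have : c x = 0 := by simp [c, d, hx', Real.sqrt_sq (ha0 x hx).le]
    simp [this]
  refine h ?_
  have hx' := ball_subset_closedBall hx
  have hu1 := (hu0 x hx').ne'
  have hs := Real.sq_sqrt (hd0 x hx').le
  have hc : c x * ‖u x‖ ^ 2 = √(d x) - a x := by
    simp only [c]; field_simp
  rw [← sq_eq_sq₀ (norm_nonneg _) hR0.le, norm_add_sq_real, inner_smul_right, norm_smul, mul_pow,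
    Real.norm_eq_abs, sq_abs]
  change ‖x‖ ^ 2 + 2 * (c x * a x) + c x ^ 2 * ‖u x‖ ^ 2 = R ^ 2
  have hmul : ‖u x‖ ^ 2 * (‖x‖ ^ 2 + 2 * (c x * a x) + c x ^ 2 * ‖u x‖ ^ 2) = ‖u x‖ ^ 2 * R ^ 2 := by
    have hdx : d x = a x ^ 2 + ‖u x‖ ^ 2 * (R ^ 2 - ‖x‖ ^ 2) := rfl
    linear_combination (c x * ‖u x‖ ^ 2 + √(d x) + a x) * hc + hs + hdx
  exact mul_left_cancel₀ (pow_ne_zero 2 hu1) hmul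

/-- **Brouwer's fixed point theorem** for bounded continuous self-maps of a Euclidean space. -/
theorem Continuous.exists_fixedPoint_of_norm_le {r : ℝ} {f : E → E} (hf : Continuous f)
    (hr : ∀ x, ‖f x‖ ≤ r) : ∃ x, f x = x := by
  by_contra! hne
  obtain ⟨x₀, -, hmin⟩ := (isCompact_closedBall (0 : E) (r + 1)).exists_isMinOn
    ⟨0, by simpa using add_nonneg ((norm_nonneg _).trans (hr 0)) zero_le_one⟩
    (hf.dist continuous_id).continuousOn
  obtain ⟨g, hg, hgf, -⟩ := hf.exists_contDiff_approx 1
    (ε := fun _ => min 1 (dist (f x₀) x₀)) continuous_const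
    fun _ => lt_min one_pos (dist_pos.2 (hne x₀))
  obtain ⟨x, hx, hfix⟩ := ContDiff.exists_fixedPoint_of_norm_lt (R := r + 1) hg fun x => by
    have h1 := (hgf x).trans_le (min_le_left _ _)
    rw [dist_eq_norm] at h1
    have := norm_le_norm_add_norm_sub (f x) (g x)
    rw [norm_sub_rev] at this
    linarith [hr x]
  have h1 := (hgf x).trans_le (min_le_right _ _)
  rw [hfix, dist_comm] at h1
  exact (hmin hx).not_gt h1

end InnerProductSpace

section Schauder

/-- A continuous retraction of the coordinate space onto the standard simplex. -/
noncomputable def simplexRetraction {ι : Type*} [Fintype ι] (w : ι → ℝ) (i : ι) : ℝ :=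
  (max (w i) 0 + max (1 - ∑ j, max (w j) 0) 0 / Fintype.card ι) / max (∑ j, max (w j) 0) 1

variable {ι : Type*} [Fintype ι]

theorem continuous_simplexRetraction : Continuous (simplexRetraction (ι := ι)) := by
  refine continuous_pi fun i => Continuous.div (by fun_prop) (by fun_prop) fun w => ?_
  exact (one_pos.trans_le (le_max_right _ _)).ne'

theorem simplexRetraction_mem [Nonempty ι] (w : ι → ℝ) :
    simplexRetraction w ∈ stdSimplex ℝ ι := by
  refine ⟨fun i => ?_, ?_⟩
  · unfold simplexRetraction
    positivity
  · simp only [simplexRetraction, ← Finset.sum_div, Finset.sum_add_distrib, Finset.sum_const,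
      Finset.card_univ, nsmul_eq_mul]
    rw [mul_div_cancel_left₀ _ (by positivity)]
    rcases le_total (∑ j, max (w j) 0) 1 with h | h
    · simp [h]
    · rw [max_eq_right (sub_nonpos.2 h), max_eq_left h, add_zero, div_self (by positivity)]

theorem simplexRetraction_of_mem {w : ι → ℝ} (hw : w ∈ stdSimplex ℝ ι) :
    simplexRetraction w = w := by
  ext i
  simp [simplexRetraction, max_eq_left (hw.1 _), hw.2]

/-- **Brouwer's fixed point theorem** for the standard simplex. -/
theorem exists_fixedPoint_stdSimplex [Nonempty ι] {f : stdSimplex ℝ ι → stdSimplex ℝ ι}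
    (hf : Continuous f) : ∃ w, f w = w := by
  let ρ : EuclideanSpace ℝ ι → stdSimplex ℝ ι := fun w =>
    ⟨simplexRetraction w.ofLp, simplexRetraction_mem _⟩
  have hρ : Continuous ρ :=
    (continuous_simplexRetraction.comp (PiLp.continuous_ofLp 2 _)).subtype_mk _
  let F : EuclideanSpace ℝ ι → EuclideanSpace ℝ ι := fun w => WithLp.toLp 2 (f (ρ w)).1
  have hF : Continuous F :=
    (PiLp.continuous_toLp 2 _).comp (continuous_subtype_val.comp (hf.comp hρ))
  obtain ⟨C, hC⟩ := (isCompact_range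
    ((PiLp.continuous_toLp 2 fun _ : ι => ℝ).comp
      (continuous_subtype_val (p := (· ∈ stdSimplex ℝ ι))))).isBounded.exists_norm_le
  obtain ⟨w, hw⟩ := hF.exists_fixedPoint_of_norm_le fun w => hC _ ⟨f (ρ w), rfl⟩
  have hw' : (f (ρ w)).1 = w.ofLp := congrArg WithLp.ofLp hw
  refine ⟨ρ w, Subtype.ext ?_⟩
  rw [hw']
  exact (simplexRetraction_of_mem (hw' ▸ (f (ρ w)).2)).symm

variable {Y : Type*} [NormedAddCommGroup Y] [NormedSpace ℝ Y]

/-- Approximate fixed points, obtained by composing with a Schauder projection onto the convex hull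
of a finite net. -/
theorem exists_dist_le_of_isCompact_closure_range {D : Set Y} (hne : D.Nonempty)
    (hconv : Convex ℝ D) {T : D → D} (hT : Continuous T)
    (hK : IsCompact (closure (range fun x => (T x : Y)))) {ε : ℝ} (hε : 0 < ε) :
    ∃ x : D, dist (T x) x ≤ ε := by
  have := hne.to_subtype
  obtain ⟨t, htT, htf, hcov⟩ :=
    finite_approx_of_totallyBounded (hK.totallyBounded.subset subset_closure) ε hε
  have := htf.fintype
  let μ : t → D → ℝ := fun i x => max (ε - dist (T x : Y) i) 0
  have hμ0 (i : t) (x : D) : 0 ≤ μ i x := le_max_right _ _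
  have hμ (x : D) : ∃ i, 0 < μ i x := by
    obtain ⟨i, hi, hlt⟩ := mem_iUnion₂.1 (hcov (mem_range_self x))
    exact ⟨⟨i, hi⟩, lt_max_of_lt_left (sub_pos.2 hlt)⟩
  have hsum (x : D) : 0 < ∑ i, μ i x :=
    Finset.sum_pos' (fun i _ => hμ0 i x) ((hμ x).imp fun i hi => ⟨Finset.mem_univ i, hi⟩)
  have : Nonempty t := ⟨(hμ (Classical.arbitrary D)).choose⟩
  let c : stdSimplex ℝ t → D := fun w => ⟨∑ i, w.1 i • (i : Y),
    hconv.sum_mem (fun i _ => w.2.1 i) w.2.2 fun i _ => by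
      obtain ⟨x, hx⟩ := htT i.2
      exact hx ▸ (T x).2⟩
  have hc : Continuous c := Continuous.subtype_mk (continuous_finsetSum _ fun i _ =>
    ((continuous_apply i).comp continuous_subtype_val).smul continuous_const) _
  have hμc (i : t) : Continuous (μ i) := by fun_prop
  let f : stdSimplex ℝ t → stdSimplex ℝ t := fun w =>
    ⟨fun i => μ i (c w) / ∑ j, μ j (c w), fun i => div_nonneg (hμ0 i _) (hsum _).le, by
      rw [← Finset.sum_div, div_self (hsum _).ne']⟩
  have hf : Continuous f := Continuous.subtype_mk (continuous_pi fun i =>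
    ((hμc i).comp hc).div (continuous_finsetSum _ fun j _ => (hμc j).comp hc)
      fun w => (hsum _).ne') _
  obtain ⟨w, hw⟩ := exists_fixedPoint_stdSimplex hf
  have hwi (i : t) : w.1 i * dist (T (c w) : Y) i ≤ w.1 i * ε := by
    by_cases hi : dist (T (c w) : Y) i ≤ ε
    · exact mul_le_mul_of_nonneg_left hi (w.2.1 i)
    · have h0 : w.1 i = 0 := by
        rw [← congrArg (fun w => w.1 i) hw]
        simp [f, μ, max_eq_right (sub_nonpos.2 (not_le.1 hi).le)]
      simp [h0]
  refine ⟨c w, ?_⟩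
  have hsub : (T (c w) : Y) - c w = ∑ i, w.1 i • ((T (c w) : Y) - i) := by
    simp only [smul_sub, Finset.sum_sub_distrib, ← Finset.sum_smul, w.2.2, one_smul]
    rfl
  calc dist (T (c w)) (c w) = ‖∑ i, w.1 i • ((T (c w) : Y) - i)‖ := by
        rw [Subtype.dist_eq, dist_eq_norm, hsub]
    _ ≤ ∑ i, w.1 i * dist (T (c w) : Y) i := norm_sum_le_of_le _ fun i _ => by
        rw [norm_smul, Real.norm_of_nonneg (w.2.1 i), dist_eq_norm]
    _ ≤ ∑ i, w.1 i * ε := Finset.sum_le_sum fun i _ => hwi i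
    _ = ε := by rw [← Finset.sum_mul, w.2.2, one_mul]

/-- **Schauder's fixed point theorem.** -/
theorem exists_fixedPoint_of_isCompact_closure_range {D : Set Y} (hne : D.Nonempty)
    (hclosed : IsClosed D) (hconv : Convex ℝ D) {T : D → D} (hT : Continuous T)
    (hK : IsCompact (closure (range fun x => (T x : Y)))) : ∃ x, T x = x := by
  have happrox := fun n : ℕ => exists_dist_le_of_isCompact_closure_range hne hconv hT hK
    (Nat.one_div_pos_of_nat (n := n) (α := ℝ))
  choose x hx using happrox
  obtain ⟨z, hz, φ, hφ, hlim⟩ := hK.tendsto_subseq fun n => subset_closure (mem_range_self (x n))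
  have hzD : z ∈ D := closure_minimal (by rintro _ ⟨x, rfl⟩; exact (T x).2) hclosed hz
  have hT' : Tendsto (fun n => T (x (φ n))) atTop (𝓝 ⟨z, hzD⟩) := tendsto_subtype_rng.2 hlim
  have hdist : Tendsto (fun n => dist (T (x (φ n))) (x (φ n))) atTop (𝓝 0) :=
    squeeze_zero (fun _ => dist_nonneg) (fun n => hx (φ n))
      (tendsto_one_div_add_atTop_nhds_zero_nat.comp hφ.tendsto_atTop)
  have hx' : Tendsto (fun n => x (φ n)) atTop (𝓝 ⟨z, hzD⟩) := hT'.congr_dist hdist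
  exact ⟨⟨z, hzD⟩, tendsto_nhds_unique ((hT.tendsto _).comp hx') hT'⟩

end Schauder

/-- The fixed point of a uniform contraction depends continuously on the parameter. -/
theorem continuous_of_uniform_contraction {X D : Type*} [TopologicalSpace X] [MetricSpace D]
    {N : X × D → D} (hN : Continuous N) {L : ℝ} (hL : L < 1)
    (hcontr : ∀ x y y', dist (N (x, y)) (N (x, y')) ≤ L * dist y y')
    {S : X → D} (hS : ∀ x, N (x, S x) = S x) : Continuous S := by
  refine continuous_iff_continuousAt.2 fun x₀ => tendsto_iff_dist_tendsto_zero.2 ?_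
  have hlim : Tendsto (fun x => dist (N (x, S x₀)) (S x₀) / (1 - L)) (𝓝 x₀) (𝓝 0) := by
    have : Continuous fun x => dist (N (x, S x₀)) (S x₀) / (1 - L) := by fun_prop
    simpa [hS] using this.tendsto x₀
  refine squeeze_zero (fun _ => dist_nonneg) (fun x => ?_) hlim
  rw [le_div_iff₀ (by linarith)]
  have h1 := dist_triangle (S x) (N (x, S x₀)) (S x₀)
  have h2 := hcontr x (S x) (S x₀)
  rw [hS] at h2
  linarith

/-- **Avramescu's fixed point theorem.**
Let `D₁` be a nonempty closed convex subset of a normed space `Y`, `D₂` a nonempty complete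
metric space, and `N₁ : D₁ × D₂ → D₁`, `N₂ : D₁ × D₂ → D₂` continuous maps such that
`N₁(D₁ × D₂)` is relatively compact in `Y` and `N₂` is a uniform contraction in its second
variable with constant `L ∈ [0, 1)`. Then the pair `(N₁, N₂)` has a fixed point. -/
theorem avramescu_fixed_point
    {Y : Type*} [NormedAddCommGroup Y] [NormedSpace ℝ Y]
    (D₁ : Set Y) (hne : D₁.Nonempty) (hclosed : IsClosed D₁) (hconv : Convex ℝ D₁)
    {D₂ : Type*} [MetricSpace D₂] [CompleteSpace D₂] [Nonempty D₂]
    (N₁ : D₁ × D₂ → D₁) (N₂ : D₁ × D₂ → D₂)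
    (hcont₁ : Continuous N₁) (hcont₂ : Continuous N₂)
    (hcompact : IsCompact (closure (Set.range (fun p : D₁ × D₂ => (N₁ p : Y)))))
    (L : ℝ) (hL₀ : 0 ≤ L) (hL₁ : L < 1)
    (hcontr : ∀ (x : D₁) (y y' : D₂), dist (N₂ (x, y)) (N₂ (x, y')) ≤ L * dist y y') :
    ∃ p : D₁ × D₂, N₁ p = p.1 ∧ N₂ p = p.2 := by
  have hC (x : D₁) : ContractingWith ⟨L, hL₀⟩ fun y => N₂ (x, y) :=
    ⟨hL₁, LipschitzWith.of_dist_le_mul (hcontr x)⟩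
  let S : D₁ → D₂ := fun x => (hC x).fixedPoint
  have hS (x : D₁) : N₂ (x, S x) = S x := (hC x).fixedPoint_isFixedPt
  have hScont : Continuous S := continuous_of_uniform_contraction hcont₂ hL₁ hcontr hS
  obtain ⟨x, hx⟩ := exists_fixedPoint_of_isCompact_closure_range hne hclosed hconv
    (T := fun x => N₁ (x, S x)) (by fun_prop)
    (hcompact.of_isClosed_subset isClosed_closure
      (closure_mono (range_subset_iff.2 fun x => ⟨(x, S x), rfl⟩)))
  exact ⟨(x, S x), hx, hS x⟩
end
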